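/- For every integer l ≥ 1 and every real q with 0 < q < 1: q^((2l²+1)/(48l)) / ∏_{k=0}^∞ (1 − q^((k+1/2)/l)) = q^(1/16) · (∑ over n ∈ ℤ^{l−1} of q^((1/2)·∑_{j=1}^{l−1} (n_j + j/(2l))²)) / ( ∏_{k=1}^∞ (1−q^k)^{l−1} · ∏_{k=0}^∞ (1 − q^(k+1/2)) ). -/

import Mathlib

open scoped BigOperators
open Finset Filter Topology

/-!
Put `q = x ^ (2 * l)`. Completing the square turns the lattice sum, up to the power of `q` that
matches the conformal weights, into `∏ j, ∑' n : ℤ, x ^ (l * n ^ 2 + j * n)` over `0 < j < l`. By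
the Jacobi triple product with base `x ^ l` and argument `x ^ j`, the `j`-th factor is `(q; q)_∞`
times the product of the `1 + x ^ m` over `m > 0` with `m ≡ ± j` modulo `2 * l`. Together these
residues are all those not divisible by `l`, so the lattice sum is
`(q; q)_∞ ^ (l - 1) * (-x; x)_∞ / (-x ^ l; x ^ l)_∞`, and Euler's identity
`(-x; x)_∞ = (x; x ^ 2)_∞⁻¹`, applied to `x` and to `x ^ l`, gives the two half-integral products.
-/

section CommRing

variable {R : Type*} [CommRing R]

/-- The finite `q`-Pochhammer symbol `(a; q)_n`, with `n` factors. -/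
def qPochhammer (a q : R) (n : ℕ) : R := ∏ i ∈ range n, (1 - a * q ^ i)

/-- The Gaussian binomial coefficient `[n, k]_q`. It is defined by its Pascal recursion rather than
as a quotient of `q`-Pochhammer symbols, so that it makes sense for every `q`. -/
def gaussBinom (q : R) : ℕ → ℕ → R
  | _, 0 => 1
  | 0, _ + 1 => 0
  | n + 1, k + 1 => gaussBinom q n k + q ^ (k + 1) * gaussBinom q n (k + 1)

lemma gaussBinom_zero_right (q : R) (n : ℕ) : gaussBinom q n 0 = 1 := by
  cases n <;> rfl

lemma gaussBinom_succ_succ (q : R) (n k : ℕ) :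
    gaussBinom q (n + 1) (k + 1) =
      gaussBinom q n k + q ^ (k + 1) * gaussBinom q n (k + 1) :=
  rfl

lemma gaussBinom_eq_zero_of_lt (q : R) {n k : ℕ} (h : n < k) : gaussBinom q n k = 0 := by
  induction n generalizing k with
  | zero => obtain ⟨k, rfl⟩ := Nat.exists_eq_succ_of_ne_zero h.ne'; rfl
  | succ n ih =>
    obtain ⟨k, rfl⟩ := Nat.exists_eq_succ_of_ne_zero (Nat.ne_zero_of_lt h)
    rw [gaussBinom_succ_succ, ih (by lia), ih (by lia), mul_zero, add_zero]

lemma gaussBinom_self (q : R) (n : ℕ) : gaussBinom q n n = 1 := by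
  induction n with
  | zero => rfl
  | succ n ih =>
    rw [gaussBinom_succ_succ, ih, gaussBinom_eq_zero_of_lt q n.lt_succ_self, mul_zero, add_zero]

lemma qPochhammer_zero (a q : R) : qPochhammer a q 0 = 1 := prod_range_zero _

lemma qPochhammer_succ (a q : R) (n : ℕ) :
    qPochhammer a q (n + 1) = qPochhammer a q n * (1 - a * q ^ n) :=
  prod_range_succ _ _

lemma qPochhammer_succ' (a q : R) (n : ℕ) :
    qPochhammer a q (n + 1) = (1 - a) * qPochhammer (a * q) q n := by
  simp only [qPochhammer, prod_range_succ', pow_zero, mul_one, pow_succ', mul_assoc, mul_comm]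

lemma qPochhammer_add (a q : R) (m n : ℕ) :
    qPochhammer a q (m + n) = qPochhammer a q m * qPochhammer (a * q ^ m) q n := by
  simp only [qPochhammer, prod_range_add, pow_add, mul_assoc]

lemma gaussBinom_add_mul_qPochhammer (q : R) (a b : ℕ) :
    gaussBinom q (a + b) a * (qPochhammer q q a * qPochhammer q q b) =
      qPochhammer q q (a + b) := by
  induction a generalizing b with
  | zero => simp [gaussBinom_zero_right, qPochhammer_zero]
  | succ a iha =>
    induction b with
    | zero => simp [gaussBinom_self, qPochhammer_zero]
    | succ b ihb =>
      have h := iha (b + 1)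
      rw [← add_assoc] at h
      rw [Nat.add_right_comm a 1 b] at ihb
      rw [show a + 1 + (b + 1) = a + b + 1 + 1 by ring, gaussBinom_succ_succ,
        qPochhammer_succ q q (a + b + 1), ← ihb]
      rw [← ihb, qPochhammer_succ q q b] at h
      rw [qPochhammer_succ q q a] at h ⊢
      rw [qPochhammer_succ q q b]
      linear_combination (1 - q * q ^ a) * h

lemma qPochhammer_neg_eq_sum (q y : R) (n : ℕ) :
    qPochhammer (-y) q n =
      ∑ k ∈ range (n + 1), gaussBinom q n k * q ^ k.choose 2 * y ^ k := by
  induction n generalizing y with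
  | zero => simp [qPochhammer_zero, gaussBinom_zero_right]
  | succ n ih =>
    let t (k : ℕ) : R := gaussBinom q n k * q ^ k.choose 2 * (y * q) ^ k
    have pascal (k : ℕ) :
        gaussBinom q (n + 1) (k + 1) * q ^ (k + 1).choose 2 * y ^ (k + 1) =
          t (k + 1) + y * t k := by
      simp only [t]
      rw [gaussBinom_succ_succ, Nat.choose_succ_succ' k 1, Nat.choose_one_right]
      ring
    have shift : ∑ k ∈ range (n + 1), t (k + 1) + 1 = ∑ k ∈ range (n + 1), t k := by
      have h := sum_range_succ' t (n + 1)
      rw [sum_range_succ] at h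
      simpa [t, gaussBinom_eq_zero_of_lt, gaussBinom_zero_right] using h.symm
    calc qPochhammer (-y) q (n + 1) = (1 + y) * ∑ k ∈ range (n + 1), t k := by
          rw [qPochhammer_succ', neg_mul, ih, sub_neg_eq_add]
      _ = ∑ k ∈ range (n + 1), (t (k + 1) + y * t k) + 1 := by
          rw [sum_add_distrib, ← mul_sum, add_mul, one_mul, ← shift]; ring
      _ = _ := by
          rw [sum_range_succ' _ (n + 1)]
          simp [pascal, gaussBinom_zero_right]

end CommRing

lemma two_mul_cast_choose_two (k : ℕ) : 2 * (k.choose 2 : ℤ) = k * (k - 1) := by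
  apply Int.cast_injective (α := ℚ)
  push_cast [Nat.cast_choose_two]
  ring

lemma sum_range_two_mul_add_one_sub {M : Type*} [AddCommMonoid M] (f : ℤ → M) (N : ℕ) :
    ∑ k ∈ range (2 * N + 1), f (k - N) = ∑ n ∈ Icc (-N : ℤ) N, f n := by
  refine sum_nbij' (fun k ↦ (k : ℤ) - N) (fun n ↦ (n + N).toNat) ?_ ?_ ?_ ?_ fun _ _ ↦ rfl
  all_goals simp only [mem_range, mem_Icc]; lia

section Field

variable {K : Type*} [Field K] {q z : K}

lemma qPochhammer_neg_mul_zpow_one_sub (hq : q ≠ 0) (hz : z ≠ 0) (N : ℕ) :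
    qPochhammer (-(z * q ^ (1 - 2 * N : ℤ))) (q ^ 2) N =
      z ^ N * (q ^ (N : ℤ) ^ 2)⁻¹ * qPochhammer (-(z⁻¹ * q)) (q ^ 2) N := by
  induction N with
  | zero => simp [qPochhammer_zero]
  | succ N ih =>
    have head : q ^ (1 - 2 * (N + 1 : ℕ) : ℤ) = q * ((q ^ 2) ^ (N + 1))⁻¹ := by
      rw [zpow_sub₀ hq, zpow_one, zpow_mul, zpow_natCast, div_eq_mul_inv]
      norm_cast
    have shift : q ^ (1 - 2 * (N + 1 : ℕ) : ℤ) * q ^ 2 = q ^ (1 - 2 * N : ℤ) := by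
      rw [← zpow_natCast, ← zpow_add₀ hq]
      push_cast
      ring_nf
    have square : q ^ ((N + 1 : ℕ) : ℤ) ^ 2 = q ^ (N : ℤ) ^ 2 * (q * (q ^ 2) ^ N) := by
      norm_cast
      ring
    rw [qPochhammer_succ', neg_mul, mul_assoc z, shift, ih, qPochhammer_succ, head, square]
    field_simp
    ring

/-- In Rothe's identity `qPochhammer_neg_eq_sum` of length `2 * N` at `y = z * q ^ (1 - 2 * N)`, the
factors are centred on `z`; reflecting the lower half of them gives the product on the left. -/
lemma qPochhammer_mul_qPochhammer_eq_sum (hq : q ≠ 0) (hz : z ≠ 0) (N : ℕ) :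
    qPochhammer (-(z * q)) (q ^ 2) N * qPochhammer (-(z⁻¹ * q)) (q ^ 2) N =
      ∑ n ∈ Icc (-N : ℤ) N,
        gaussBinom (q ^ 2) (2 * N) (n + N).toNat * (q ^ n ^ 2 * z ^ n) := by
  set y := z * q ^ (1 - 2 * N : ℤ) with hy
  have upper : -y * (q ^ 2) ^ N = -(z * q) := by
    rw [hy, neg_mul, mul_assoc, ← pow_mul, ← zpow_natCast q (2 * N), ← zpow_add₀ hq]
    simp
  calc _ = q ^ (N : ℤ) ^ 2 * (z ^ N)⁻¹ * qPochhammer (-y) (q ^ 2) (2 * N) := by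
        rw [two_mul, qPochhammer_add, upper, hy, qPochhammer_neg_mul_zpow_one_sub hq hz]
        field_simp
    _ = ∑ k ∈ range (2 * N + 1), gaussBinom (q ^ 2) (2 * N) k *
          (q ^ ((k : ℤ) - N) ^ 2 * z ^ ((k : ℤ) - N)) := by
        rw [qPochhammer_neg_eq_sum, mul_sum]
        refine sum_congr rfl fun k _ ↦ ?_
        have hexp : ((k : ℤ) - N) ^ 2 = N ^ 2 + (2 : ℕ) * k.choose 2 + (1 - 2 * N) * k := by
          push_cast
          rw [two_mul_cast_choose_two]
          ring
        rw [hexp, hy, mul_pow, zpow_sub₀ hz, zpow_add₀ hq, zpow_add₀ hq, zpow_mul, zpow_mul]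
        simp only [zpow_natCast]
        ring
    _ = _ := by
        rw [← sum_range_two_mul_add_one_sub]
        simp only [sub_add_cancel, Int.toNat_natCast]

end Field

section NormedField

variable {𝕜 : Type*} [NormedField 𝕜]

/-- The infinite `q`-Pochhammer symbol `(a; q)_∞`, meant for `‖q‖ < 1`. -/
noncomputable def qPochhammerInf (a q : 𝕜) : 𝕜 := ∏' i : ℕ, (1 - a * q ^ i)

variable {a q x z : 𝕜}

lemma norm_pow_lt_one (hx : ‖x‖ < 1) {n : ℕ} (hn : n ≠ 0) : ‖x ^ n‖ < 1 := by
  rw [norm_pow]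
  exact pow_lt_one₀ (norm_nonneg x) hx hn

lemma summable_norm_neg_mul_pow (a : 𝕜) (hq : ‖q‖ < 1) :
    Summable fun i : ℕ ↦ ‖-(a * q ^ i)‖ := by
  simpa only [norm_neg, norm_mul, norm_pow] using
    (summable_geometric_of_lt_one (norm_nonneg q) hq).mul_left ‖a‖

lemma one_sub_mul_pow_ne_zero (ha : ‖a‖ < 1) (hq : ‖q‖ < 1) (i : ℕ) : 1 - a * q ^ i ≠ 0 := by
  refine sub_ne_zero_of_ne fun h ↦ (norm_one (α := 𝕜)).not_lt ?_
  rw [h, norm_mul, norm_pow]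
  exact mul_lt_one_of_nonneg_of_lt_one_left (norm_nonneg a) ha (pow_le_one₀ (norm_nonneg q) hq.le)

lemma qPochhammer_ne_zero (ha : ‖a‖ < 1) (hq : ‖q‖ < 1) (n : ℕ) : qPochhammer a q n ≠ 0 :=
  prod_ne_zero_iff.mpr fun i _ ↦ one_sub_mul_pow_ne_zero ha hq i

lemma gaussBinom_add (hq : ‖q‖ < 1) (a b : ℕ) :
    gaussBinom q (a + b) a =
      qPochhammer q q (a + b) * ((qPochhammer q q a)⁻¹ * (qPochhammer q q b)⁻¹) := by
  rw [← gaussBinom_add_mul_qPochhammer]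
  field [qPochhammer_ne_zero hq hq a, qPochhammer_ne_zero hq hq b]

/-- By the ratio test: consecutive terms have ratio `q ^ (2 * n + 1) * z`. -/
lemma summable_norm_pow_sq_mul_pow (hq0 : q ≠ 0) (hq : ‖q‖ < 1) (hz : z ≠ 0) :
    Summable fun n : ℕ ↦ ‖q ^ n ^ 2 * z ^ n‖ := by
  refine summable_of_ratio_test_tendsto_lt_one zero_lt_one (.of_forall fun n ↦ by simp [hq0, hz]) ?_
  have h : Tendsto (fun n : ℕ ↦ ‖q‖ * ‖z‖ * (‖q‖ ^ 2) ^ n) atTop (𝓝 0) := by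
    simpa using (tendsto_pow_atTop_nhds_zero_of_lt_one (sq_nonneg ‖q‖)
      (pow_lt_one₀ (norm_nonneg q) hq two_ne_zero)).const_mul (‖q‖ * ‖z‖)
  refine h.congr fun n ↦ ?_
  simp only [norm_mul, norm_pow, norm_norm]
  field [norm_ne_zero_iff.mpr hq0, norm_ne_zero_iff.mpr hz]

lemma summable_norm_zpow_sq_mul_zpow (hq0 : q ≠ 0) (hq : ‖q‖ < 1) (hz : z ≠ 0) :
    Summable fun n : ℤ ↦ ‖q ^ n ^ 2 * z ^ n‖ := by
  refine .of_nat_of_neg ?_ ?_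
  · exact_mod_cast summable_norm_pow_sq_mul_pow hq0 hq hz
  · simpa only [neg_sq, zpow_neg, ← inv_pow, zpow_natCast, ← Nat.cast_pow] using
      summable_norm_pow_sq_mul_pow hq0 hq (inv_ne_zero hz)

variable [CompleteSpace 𝕜]

lemma multipliable_one_sub_mul_pow (a : 𝕜) (hq : ‖q‖ < 1) :
    Multipliable fun i : ℕ ↦ 1 - a * q ^ i := by
  simpa only [sub_eq_add_neg] using
    multipliable_one_add_of_summable (summable_norm_neg_mul_pow a hq)

lemma tendsto_qPochhammer (a : 𝕜) (hq : ‖q‖ < 1) :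
    Tendsto (qPochhammer a q) atTop (𝓝 (qPochhammerInf a q)) :=
  (multipliable_one_sub_mul_pow a hq).tendsto_prod_tprod_nat

lemma qPochhammerInf_ne_zero (ha : ‖a‖ < 1) (hq : ‖q‖ < 1) : qPochhammerInf a q ≠ 0 := by
  simpa only [qPochhammerInf, ← sub_eq_add_neg] using tprod_one_add_ne_zero_of_summable
    (fun i ↦ by simpa only [← sub_eq_add_neg] using one_sub_mul_pow_ne_zero ha hq i)
    (summable_norm_neg_mul_pow a hq)

lemma tendsto_gaussBinom_add (hq : ‖q‖ < 1) {ι : Type*} {l : Filter ι} {a b : ι → ℕ}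
    (ha : Tendsto a l atTop) (hb : Tendsto b l atTop) :
    Tendsto (fun i ↦ gaussBinom q (a i + b i) (a i)) l (𝓝 (qPochhammerInf q q)⁻¹) := by
  have hne := qPochhammerInf_ne_zero hq hq
  have lim := tendsto_qPochhammer q hq
  have h := (lim.comp (ha.atTop_add_atTop hb)).mul
    (((lim.comp ha).inv₀ hne).mul ((lim.comp hb).inv₀ hne))
  rw [mul_inv_cancel_left₀ hne] at h
  exact h.congr fun i ↦ (gaussBinom_add hq _ _).symm

lemma tendsto_gaussBinom_two_mul (hq : ‖q‖ < 1) (n : ℤ) :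
    Tendsto (fun N : ℕ ↦ gaussBinom q (2 * N) (n + N).toNat) atTop (𝓝 (qPochhammerInf q q)⁻¹) := by
  have tendsto_toNat (m : ℤ) : Tendsto (fun N : ℕ ↦ (m + N).toNat) atTop atTop :=
    tendsto_atTop.2 fun b ↦ (eventually_ge_atTop (b + m.natAbs)).mono fun N hN ↦ by lia
  refine (tendsto_gaussBinom_add hq (tendsto_toNat n) (tendsto_toNat (-n))).congr' ?_
  filter_upwards [eventually_ge_atTop n.natAbs] with N hN
  rw [show (n + N).toNat + (-n + N).toNat = 2 * N by lia]

lemma exists_norm_gaussBinom_le (hq : ‖q‖ < 1) : ∃ C, ∀ n k, ‖gaussBinom q n k‖ ≤ C := by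
  have lim := tendsto_qPochhammer q hq
  obtain ⟨A, hA⟩ := lim.norm.bddAbove_range
  obtain ⟨B, hB⟩ := (lim.inv₀ (qPochhammerInf_ne_zero hq hq)).norm.bddAbove_range
  simp only [mem_upperBounds, Set.forall_mem_range] at hA hB
  have hA0 : 0 ≤ A := (norm_nonneg _).trans (hA 0)
  have hB0 : 0 ≤ B := (norm_nonneg _).trans (hB 0)
  refine ⟨A * (B * B), fun n k ↦ ?_⟩
  rcases lt_or_ge n k with h | h
  · rw [gaussBinom_eq_zero_of_lt q h, norm_zero]
    positivity
  · obtain ⟨b, rfl⟩ := Nat.exists_eq_add_of_le h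
    rw [gaussBinom_add hq, norm_mul, norm_mul]
    gcongr
    exacts [hA _, hB _, hB _]

/-- The **Jacobi triple product**, obtained by dominated convergence from its finite form. -/
theorem tsum_zpow_sq_mul_zpow (hq0 : q ≠ 0) (hq : ‖q‖ < 1) (hz : z ≠ 0) :
    ∑' n : ℤ, q ^ n ^ 2 * z ^ n =
      qPochhammerInf (q ^ 2) (q ^ 2) *
        (qPochhammerInf (-(z * q)) (q ^ 2) * qPochhammerInf (-(z⁻¹ * q)) (q ^ 2)) := by
  have hq2 : ‖q ^ 2‖ < 1 := norm_pow_lt_one hq two_ne_zero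
  let F (N : ℕ) : ℤ → 𝕜 := Set.indicator (Icc (-N : ℤ) N) fun n ↦
    gaussBinom (q ^ 2) (2 * N) (n + N).toNat * (q ^ n ^ 2 * z ^ n)
  obtain ⟨C, hC⟩ := exists_norm_gaussBinom_le hq2
  have bound (N : ℕ) (n : ℤ) : ‖F N n‖ ≤ C * ‖q ^ n ^ 2 * z ^ n‖ := by
    refine (norm_indicator_le_norm_self _ _).trans ?_
    rw [norm_mul]
    gcongr
    exact hC _ _
  have pointwise (n : ℤ) :
      Tendsto (F · n) atTop (𝓝 ((qPochhammerInf (q ^ 2) (q ^ 2))⁻¹ * (q ^ n ^ 2 * z ^ n))) := by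
    refine ((tendsto_gaussBinom_two_mul hq2 n).mul_const _).congr' ?_
    filter_upwards [eventually_ge_atTop n.natAbs] with N hN
    have mem : n ∈ Icc (-N : ℤ) N := mem_Icc.2 ⟨by lia, by lia⟩
    simp only [F, Set.indicator_of_mem (mem_coe.2 mem)]
  have sum_eq (N : ℕ) : ∑' n, F N n =
      qPochhammer (-(z * q)) (q ^ 2) N * qPochhammer (-(z⁻¹ * q)) (q ^ 2) N := by
    rw [qPochhammer_mul_qPochhammer_eq_sum hq0 hz, sum_eq_tsum_indicator]
  have limit := tendsto_tsum_of_dominated_convergence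
    ((summable_norm_zpow_sq_mul_zpow hq0 hq hz).mul_left C) pointwise (.of_forall bound)
  simp only [sum_eq, tsum_mul_left] at limit
  have h := tendsto_nhds_unique limit ((tendsto_qPochhammer _ hq2).mul (tendsto_qPochhammer _ hq2))
  rwa [inv_mul_eq_iff_eq_mul₀ (qPochhammerInf_ne_zero hq2 hq2)] at h

lemma qPochhammerInf_eq_prod_residues (a : 𝕜) (hq : ‖q‖ < 1) {N : ℕ} (hN : N ≠ 0) :
    qPochhammerInf a q = ∏ r ∈ range N, qPochhammerInf (a * q ^ r) (q ^ N) := by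
  have : NeZero N := ⟨hN⟩
  let e : Fin N × ℕ ≃ ℕ := (Equiv.prodComm _ _).trans (Nat.divModEquiv N).symm
  have he (r : Fin N) (k : ℕ) : 1 - a * q ^ e (r, k) = 1 - a * q ^ (r : ℕ) * (q ^ N) ^ k := by
    simp only [e, Equiv.trans_apply, Equiv.prodComm_apply, Prod.swap_prod_mk,
      Nat.divModEquiv_symm_apply]
    ring
  have total := e.hasProd_iff.mpr (multipliable_one_sub_mul_pow a hq).hasProd
  have fiber (r : Fin N) : HasProd (fun k ↦ 1 - a * q ^ e (r, k))
      (qPochhammerInf (a * q ^ (r : ℕ)) (q ^ N)) := by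
    simp only [he]
    exact (multipliable_one_sub_mul_pow _ (norm_pow_lt_one hq hN)).hasProd
  rw [← Fin.prod_univ_eq_prod_range (fun r ↦ qPochhammerInf (a * q ^ r) (q ^ N))]
  exact (total.prod_fiberwise fiber).unique (hasProd_fintype _)

lemma qPochhammerInf_mul_neg (a : 𝕜) (hq : ‖q‖ < 1) :
    qPochhammerInf a q * qPochhammerInf (-a) q = qPochhammerInf (a ^ 2) (q ^ 2) := by
  rw [qPochhammerInf, qPochhammerInf, qPochhammerInf,
    ← (multipliable_one_sub_mul_pow a hq).tprod_mul (multipliable_one_sub_mul_pow (-a) hq)]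
  refine tprod_congr fun i ↦ ?_
  ring

/-- **Euler's identity** between partitions into odd parts and into distinct parts. -/
lemma qPochhammerInf_sq_mul_qPochhammerInf_neg (hx : ‖x‖ < 1) :
    qPochhammerInf x (x ^ 2) * qPochhammerInf (-x) x = 1 := by
  have split : qPochhammerInf x x = qPochhammerInf x (x ^ 2) * qPochhammerInf (x ^ 2) (x ^ 2) := by
    simpa [prod_range_succ, ← sq] using qPochhammerInf_eq_prod_residues x hx two_ne_zero
  rw [← qPochhammerInf_mul_neg x hx, mul_left_comm] at split
  exact (mul_eq_left₀ (qPochhammerInf_ne_zero hx hx)).mp split.symm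

end NormedField

lemma prod_range_two_mul_eq_prod_add_mul_sub {M : Type*} [CommMonoid M] (f : ℕ → M)
    {l : ℕ} (hl : l ≠ 0) :
    ∏ i ∈ range (2 * l), f (i + 1) =
      f l * f (2 * l) * ∏ j ∈ range (l - 1), (f (l + (j + 1)) * f (l - (j + 1))) := by
  obtain ⟨m, rfl⟩ := Nat.exists_eq_succ_of_ne_zero hl
  have reflect : ∏ j ∈ range m, f (j + 1) = ∏ j ∈ range m, f (m + 1 - (j + 1)) := by
    rw [← prod_range_reflect]
    refine prod_congr rfl fun j hj ↦ ?_
    rw [mem_range] at hj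
    congr 1
    lia
  simp only [Nat.succ_eq_add_one, Nat.add_sub_cancel]
  rw [two_mul, prod_range_add, prod_range_succ, prod_range_succ, prod_mul_distrib, reflect]
  simp only [add_assoc]
  ac_rfl

section Pi

variable {R κ : Type*} [NormedCommRing R] {m : ℕ} {f : Fin m → κ → R}

lemma summable_norm_prod_pi (hf : ∀ i, Summable fun k ↦ ‖f i k‖) :
    Summable fun n : Fin m → κ ↦ ‖∏ i, f i (n i)‖ := by
  induction m with
  | zero => exact .of_finite
  | succ m ih =>
    have h := (hf 0).mul_norm (ih fun i ↦ hf i.succ)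
    rw [← (Fin.consEquiv fun _ ↦ κ).symm.summable_iff] at h
    simp only [Fin.prod_univ_succ]
    exact h

lemma tsum_prod_pi [CompleteSpace R] (hf : ∀ i, Summable fun k ↦ ‖f i k‖) :
    ∑' n : Fin m → κ, ∏ i, f i (n i) = ∏ i, ∑' k, f i k := by
  induction m with
  | zero => simp
  | succ m ih =>
    have tail (i : Fin m) := hf i.succ
    rw [Fin.prod_univ_succ, ← ih tail,
      tsum_mul_tsum_of_summable_norm (hf 0) (summable_norm_prod_pi tail),
      ← (Fin.consEquiv fun _ ↦ κ).tsum_eq]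
    simp only [Fin.prod_univ_succ]
    rfl

end Pi

lemma prod_zpow_eq_zpow_sum₀ {G₀ ι : Type*} [CommGroupWithZero G₀] {a : G₀} (ha : a ≠ 0)
    (s : Finset ι) (f : ι → ℤ) : ∏ i ∈ s, a ^ f i = a ^ ∑ i ∈ s, f i := by
  induction s using Finset.cons_induction with
  | empty => simp
  | cons i s hi ih => rw [sum_cons, prod_cons, zpow_add₀ ha, ih]

section Theta

variable {𝕜 : Type*} [NormedField 𝕜] [CompleteSpace 𝕜] {x : 𝕜} {l : ℕ}

lemma tsum_zpow_quadratic (hx0 : x ≠ 0) (hx : ‖x‖ < 1) {j : ℕ} (hj : j < l) :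
    ∑' n : ℤ, x ^ (l * n ^ 2 + j * n) =
      qPochhammerInf (x ^ (2 * l)) (x ^ (2 * l)) *
        (qPochhammerInf (-x ^ (l + j)) (x ^ (2 * l)) *
          qPochhammerInf (-x ^ (l - j)) (x ^ (2 * l))) := by
  have h := tsum_zpow_sq_mul_zpow (pow_ne_zero l hx0) (norm_pow_lt_one hx (by lia))
    (pow_ne_zero j hx0)
  have lower : (x ^ j)⁻¹ * x ^ l = x ^ (l - j) := by
    rw [pow_sub₀ x hx0 hj.le, mul_comm]
  rw [lower, ← pow_add, ← pow_mul, mul_comm l 2, add_comm j l] at h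
  rw [← h]
  refine tsum_congr fun n ↦ ?_
  rw [zpow_add₀ hx0, zpow_mul, zpow_mul, zpow_natCast, zpow_natCast]

lemma tsum_zpow_sum_quadratic (hx0 : x ≠ 0) (hx : ‖x‖ < 1) (l : ℕ) :
    ∑' n : Fin (l - 1) → ℤ, x ^ ∑ j, (l * n j ^ 2 + (j + 1) * n j : ℤ) =
      qPochhammerInf (x ^ (2 * l)) (x ^ (2 * l)) ^ (l - 1) *
        ∏ j ∈ range (l - 1), (qPochhammerInf (-x ^ (l + (j + 1))) (x ^ (2 * l)) *
          qPochhammerInf (-x ^ (l - (j + 1))) (x ^ (2 * l))) := by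
  have summable (j : Fin (l - 1)) :
      Summable fun n : ℤ ↦ ‖x ^ (l * n ^ 2 + (j + 1) * n : ℤ)‖ := by
    have hl0 : l ≠ 0 := by have := j.pos; lia
    refine (summable_norm_zpow_sq_mul_zpow (pow_ne_zero l hx0) (norm_pow_lt_one hx hl0)
      (pow_ne_zero (j + 1) hx0)).congr fun n ↦ ?_
    rw [zpow_add₀ hx0, zpow_mul, zpow_mul, ← Nat.cast_succ, zpow_natCast, zpow_natCast]
  have factor (j : ℕ) (hj : j ∈ range (l - 1)) := tsum_zpow_quadratic (l := l) (j := j + 1) hx0 hx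
    (by rw [mem_range] at hj; lia)
  simp only [← prod_zpow_eq_zpow_sum₀ hx0]
  rw [tsum_prod_pi summable,
    Fin.prod_univ_eq_prod_range (fun j ↦ ∑' n : ℤ, x ^ (l * n ^ 2 + (j + 1) * n : ℤ)),
    prod_congr rfl (fun j hj ↦ by exact_mod_cast factor j hj), prod_mul_distrib, prod_const,
    card_range]

lemma qPochhammerInf_neg_eq_mul_prod (hx : ‖x‖ < 1) (hl : l ≠ 0) :
    qPochhammerInf (-x) x = qPochhammerInf (-x ^ l) (x ^ l) *
      ∏ j ∈ range (l - 1), (qPochhammerInf (-x ^ (l + (j + 1))) (x ^ (2 * l)) *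
          qPochhammerInf (-x ^ (l - (j + 1))) (x ^ (2 * l))) := by
  have multiples : qPochhammerInf (-x ^ l) (x ^ l) =
      qPochhammerInf (-x ^ l) (x ^ (2 * l)) * qPochhammerInf (-x ^ (2 * l)) (x ^ (2 * l)) := by
    rw [qPochhammerInf_eq_prod_residues _ (norm_pow_lt_one hx hl) two_ne_zero,
      prod_range_succ, prod_range_one]
    ring_nf
  rw [qPochhammerInf_eq_prod_residues _ hx (mul_ne_zero two_ne_zero hl), multiples,
    ← prod_range_two_mul_eq_prod_add_mul_sub (fun s ↦ qPochhammerInf (-x ^ s) (x ^ (2 * l))) hl]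
  simp only [neg_mul, pow_succ']

theorem tsum_zpow_sum_quadratic_mul_qPochhammerInf (hx0 : x ≠ 0) (hx : ‖x‖ < 1) (hl : l ≠ 0) :
    (∑' n : Fin (l - 1) → ℤ, x ^ ∑ j, (l * n j ^ 2 + (j + 1) * n j : ℤ)) *
        qPochhammerInf x (x ^ 2) =
      qPochhammerInf (x ^ (2 * l)) (x ^ (2 * l)) ^ (l - 1) *
        qPochhammerInf (x ^ l) (x ^ (2 * l)) := by
  have euler := qPochhammerInf_sq_mul_qPochhammerInf_neg hx
  have euler_pow := qPochhammerInf_sq_mul_qPochhammerInf_neg (norm_pow_lt_one hx hl)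
  rw [qPochhammerInf_neg_eq_mul_prod hx hl] at euler
  rw [← pow_mul, mul_comm l 2] at euler_pow
  rw [tsum_zpow_sum_quadratic hx0 hx]
  generalize ∏ j ∈ range (l - 1), (qPochhammerInf (-x ^ (l + (j + 1))) (x ^ (2 * l)) *
    qPochhammerInf (-x ^ (l - (j + 1))) (x ^ (2 * l))) = P at *
  linear_combination qPochhammerInf (x ^ (2 * l)) (x ^ (2 * l)) ^ (l - 1) *
    (qPochhammerInf (x ^ l) (x ^ (2 * l)) * euler - P * qPochhammerInf x (x ^ 2) * euler_pow)

end Theta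

lemma sum_range_succ_sq {K : Type*} [Field K] [CharZero K] (n : ℕ) :
    ∑ j ∈ range n, ((j : K) + 1) ^ 2 = (n : K) * (n + 1) * (2 * n + 1) / 6 := by
  induction n with
  | zero => simp
  | succ n ih =>
    rw [sum_range_succ, ih]
    push_cast
    ring

lemma conformal_weight_eq {l : ℕ} (hl : 1 ≤ l) (n : Fin (l - 1) → ℤ) :
    (1 : ℝ) / 16 + 1 / 2 * ∑ j : Fin (l - 1), ((n j : ℝ) + ((j.val : ℝ) + 1) / (2 * l)) ^ 2 =
      (2 * (l : ℝ) ^ 2 + 1) / (48 * l) +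
        (∑ j, (l * n j ^ 2 + (j + 1) * n j : ℤ) : ℤ) / (2 * l : ℕ) := by
  have hl0 : (l : ℝ) ≠ 0 := by positivity
  have charges : ∑ j : Fin (l - 1), ((j : ℝ) + 1) ^ 2 = ((l : ℝ) - 1) * l * (2 * l - 1) / 6 := by
    rw [Fin.sum_univ_eq_sum_range (fun j ↦ ((j : ℝ) + 1) ^ 2), sum_range_succ_sq]
    push_cast [hl]
    ring
  have square (j : Fin (l - 1)) : ((n j : ℝ) + ((j.val : ℝ) + 1) / (2 * l)) ^ 2 =
      (l * n j ^ 2 + (j + 1) * n j) / l + ((j : ℝ) + 1) ^ 2 / (4 * l ^ 2) := by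
    field_simp
    ring
  simp only [square]
  rw [sum_add_distrib, ← sum_div, ← sum_div, charges]
  push_cast
  field_simp
  ring

section Real

variable {x : ℝ} {l : ℕ}

lemma pow_rpow_eq_zpow {t : ℝ} {N : ℕ} {n : ℤ} (hx : 0 < x) (h : N * t = n) :
    (x ^ N) ^ t = x ^ n := by
  rw [← Real.rpow_natCast, ← Real.rpow_mul hx.le, h, Real.rpow_intCast]

lemma tprod_one_sub_rpow_add_half_div (hx : 0 < x) (m : ℕ) {c : ℕ} (hc : c ≠ 0) :
    ∏' k : ℕ, (1 - (x ^ (2 * (m * c))) ^ (((k : ℝ) + 1 / 2) / c)) =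
      qPochhammerInf (x ^ m) (x ^ (2 * m)) := by
  refine tprod_congr fun k ↦ ?_
  rw [pow_rpow_eq_zpow (n := (m + 2 * m * k : ℕ)) hx (by push_cast; field_simp; ring),
    zpow_natCast, pow_add, pow_mul x (2 * m)]

lemma rpow_mul_tsum_rpow_charges (hx : 0 < x) (hl : 1 ≤ l) :
    (x ^ (2 * l)) ^ ((1 : ℝ) / 16) * ∑' n : Fin (l - 1) → ℤ,
        (x ^ (2 * l)) ^ ((1 / 2 : ℝ) * ∑ j : Fin (l - 1),
          ((n j : ℝ) + ((j.val : ℝ) + 1) / (2 * l)) ^ 2) =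
      (x ^ (2 * l)) ^ ((2 * (l : ℝ) ^ 2 + 1) / (48 * l)) *
        ∑' n : Fin (l - 1) → ℤ, x ^ ∑ j, (l * n j ^ 2 + (j + 1) * n j : ℤ) := by
  have hq : 0 < x ^ (2 * l) := by positivity
  simp only [← tsum_mul_left, ← Real.rpow_add hq, conformal_weight_eq hl]
  refine tsum_congr fun n ↦ ?_
  rw [Real.rpow_add hq, pow_rpow_eq_zpow hx (mul_div_cancel₀ _ (by positivity))]

lemma tprod_one_sub_pow_succ_pow {q : ℝ} (hq : ‖q‖ < 1) (m : ℕ) :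
    ∏' k : ℕ, (1 - q ^ (k + 1)) ^ m = qPochhammerInf q q ^ m := by
  simp only [pow_succ']
  exact (multipliable_one_sub_mul_pow q hq).tprod_pow m

end Real

/-- Character identity for the conjugation `[l]₋ ∼ [1]₋ · ∏_{j=1}^{l−1} [1, e^{2πi·j/(2l)}]₊`:
    `q^((2l²+1)/(48l)) / ∏_{k≥0}(1 − q^((k+1/2)/l))
     = q^(1/16) · Θ/(∏_{k≥1}(1−q^k)^{l−1} · ∏_{k≥0}(1−q^(k+1/2)))`
    where `Θ` is the lattice sum over `ℤ^{l−1}` with charges `j/(2l)`. -/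
theorem stmt16 (l : ℕ) (hl : 1 ≤ l) (q : ℝ) (hq0 : 0 < q) (hq1 : q < 1) :
    q ^ ((2 * (l : ℝ) ^ 2 + 1) / (48 * l)) / ∏' k : ℕ, (1 - q ^ (((k : ℝ) + 1 / 2) / l)) =
      q ^ ((1 : ℝ) / 16) *
        (∑' n : Fin (l - 1) → ℤ,
          q ^ ((1 / 2 : ℝ) * ∑ j : Fin (l - 1), ((n j : ℝ) + ((j.val : ℝ) + 1) / (2 * l)) ^ 2)) /
        ((∏' k : ℕ, (1 - q ^ (k + 1)) ^ (l - 1)) * ∏' k : ℕ, (1 - q ^ ((k : ℝ) + 1 / 2))) := by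
  obtain ⟨x, hx0, hx1, rfl⟩ : ∃ x : ℝ, 0 < x ∧ x < 1 ∧ x ^ (2 * l) = q :=
    ⟨q ^ ((2 * l : ℕ) : ℝ)⁻¹, by positivity, Real.rpow_lt_one hq0.le hq1 (by positivity),
      Real.rpow_inv_natCast_pow hq0.le (by positivity)⟩
  have hl0 : l ≠ 0 := by positivity
  have hx : ‖x‖ < 1 := by rwa [Real.norm_of_nonneg hx0.le]
  have hq := norm_pow_lt_one hx (mul_ne_zero two_ne_zero hl0)
  have twisted : ∏' k : ℕ, (1 - (x ^ (2 * l)) ^ (((k : ℝ) + 1 / 2) / l)) =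
      qPochhammerInf x (x ^ 2) := by
    simpa using tprod_one_sub_rpow_add_half_div hx0 1 hl0
  have untwisted : ∏' k : ℕ, (1 - (x ^ (2 * l)) ^ ((k : ℝ) + 1 / 2)) =
      qPochhammerInf (x ^ l) (x ^ (2 * l)) := by
    simpa using tprod_one_sub_rpow_add_half_div hx0 l one_ne_zero
  rw [twisted, untwisted, tprod_one_sub_pow_succ_pow hq, rpow_mul_tsum_rpow_charges hx0 hl,
    div_eq_div_iff (qPochhammerInf_ne_zero hx (norm_pow_lt_one hx two_ne_zero))
      (mul_ne_zero (pow_ne_zero _ (qPochhammerInf_ne_zero hq hq))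
        (qPochhammerInf_ne_zero (norm_pow_lt_one hx hl0) hq)),
    mul_assoc, tsum_zpow_sum_quadratic_mul_qPochhammerInf hx0.ne' hx hl0]
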